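/- There is an absolute constant C > 0 such that for every ε ∈ (0,1) and every finite set V with n = |V| ≥ 2 the following holds: there exist a finite auxiliary node set A with |A| ≤ C·ε^{−1/2}·(1 + log₂(1 + log₂(1/ε))) and a weight function ŵ : (V ∪ A) × (V ∪ A) → ℝ≥0 with at most C·n·ε^{−1/2}·(1 + log₂(1 + log₂(1/ε))) nonzero values, such that for every S ⊆ V, |S|·(n − |S|) ≤ min_{T ⊆ A} dircut_ŵ(S ∪ T) ≤ (1+ε)·|S|·(n − |S|). (This gives an augmented cut sparsifier for the complete graph on n nodes, whose cut function is S ↦ |S|·(n−|S|).) -/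

import Mathlib

/-- Directed cut value of a weighted directed graph on a finite node set. -/
noncomputable def dirCut {N : Type*} [Fintype N] [DecidableEq N]
    (W : N → N → ℝ) (U : Finset N) : ℝ :=
  ∑ u ∈ U, ∑ v ∈ Uᶜ, W u v

/-! Write `n = |V|`, `s = |S|`, `t = n - s`. An auxiliary node joined to all of `V` with weight `p`
towards it and weight `q` away from it contributes `min (p * s) (q * t)` to the augmented cut, since
it joins whichever side is cheaper. Such functions are hats, so nonnegative sums of them realise the
chord interpolant of the concave function `s ↦ s * (n - s)` at any breakpoints containing `0`
and `n`. On a segment `[n * x, n * y]` the interpolation error is `(s - n * x) * (n * y - s)`;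
for `x = sin² α`, `y = sin² β` it is at most `sin² (β - α) * (s * t)`, because the difference
of the two sides is a perfect square. Hence the breakpoints `n * sin² (j * θ)` with
`θ = π / (2 * (m + 1))` give relative error `sin² θ` with `m` auxiliary nodes, and
`m ≥ π / (2 * √ε)` nodes suffice, without any logarithmic factor. -/

section GadgetCuts

open Finset

variable {V A : Type*}

/-- The combination, over all auxiliary nodes `a : A`, of asymmetric cardinality-based gadgets:
every `v : V` is joined to `a` by an edge of weight `p a`, and `a` to every `v` by an edge of
weight `q a`. -/
def gadgetWeight (p q : A → ℝ) : V ⊕ A → V ⊕ A → ℝ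
  | .inl _, .inr a => p a
  | .inr a, .inl _ => q a
  | _, _ => 0

lemma gadgetWeight_nonneg {p q : A → ℝ} (hp : ∀ a, 0 ≤ p a) (hq : ∀ a, 0 ≤ q a) :
    ∀ u v : V ⊕ A, 0 ≤ gadgetWeight p q u v
  | .inl _, .inl _ => le_rfl
  | .inl _, .inr a => hp a
  | .inr a, .inl _ => hq a
  | .inr _, .inr _ => le_rfl

lemma ncard_gadgetWeight_ne_zero_le [Finite V] [Finite A] (p q : A → ℝ) :
    {e : (V ⊕ A) × (V ⊕ A) | gadgetWeight p q e.1 e.2 ≠ 0}.ncard ≤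
      2 * (Nat.card V * Nat.card A) := by
  have hsub : {e : (V ⊕ A) × (V ⊕ A) | gadgetWeight p q e.1 e.2 ≠ 0} ⊆
      (Set.range Sum.inl ×ˢ Set.range Sum.inr) ∪ (Set.range Sum.inr ×ˢ Set.range Sum.inl) := by
    rintro ⟨_ | _, _ | _⟩ h <;> simp_all [gadgetWeight]
  calc
    _ ≤ _ := (Set.ncard_le_ncard hsub (Set.toFinite _)).trans (Set.ncard_union_le _ _)
    _ = 2 * (Nat.card V * Nat.card A) := by
      rw [Set.ncard_prod, Set.ncard_prod, Set.ncard_range_of_injective Sum.inl_injective,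
        Set.ncard_range_of_injective Sum.inr_injective]
      ring

variable [DecidableEq V] [DecidableEq A]

lemma image_inl_union_image_inr (S : Finset V) (T : Finset A) :
    S.image Sum.inl ∪ T.image Sum.inr = S.disjSum T := by
  ext (_ | _) <;> simp

lemma compl_disjSum [Fintype V] [Fintype A] (S : Finset V) (T : Finset A) :
    (S.disjSum T)ᶜ = Sᶜ.disjSum Tᶜ := by
  ext (_ | _) <;> simp

lemma iInf_sum_add_sum_compl [Fintype A] (f g : A → ℝ) :
    ⨅ T : Finset A, (∑ a ∈ T, f a + ∑ a ∈ Tᶜ, g a) = ∑ a, min (f a) (g a) := by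
  apply le_antisymm
  · let T : Finset A := {a | f a ≤ g a}
    calc
      _ ≤ ∑ a ∈ T, f a + ∑ a ∈ Tᶜ, g a := ciInf_le (Set.finite_range _).bddBelow T
      _ = ∑ a ∈ T, min (f a) (g a) + ∑ a ∈ Tᶜ, min (f a) (g a) := by
        congr 1 <;> refine sum_congr rfl fun a ha ↦ ?_
        · exact (min_eq_left (by simpa [T] using ha)).symm
        · exact (min_eq_right (le_of_lt (by simpa [T] using ha))).symm
      _ = ∑ a, min (f a) (g a) := sum_add_sum_compl T _
  · refine le_ciInf fun T ↦ ?_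
    rw [← sum_add_sum_compl T]
    gcongr
    exacts [min_le_left _ _, min_le_right _ _]

variable [Fintype V] [Fintype A]

lemma dirCut_gadgetWeight (p q : A → ℝ) (S : Finset V) (T : Finset A) :
    dirCut (gadgetWeight p q) (S.disjSum T) = ∑ a ∈ T, q a * #Sᶜ + ∑ a ∈ Tᶜ, p a * #S := by
  simp only [dirCut, compl_disjSum, sum_disjSum, gadgetWeight, sum_const_zero, zero_add, add_zero,
    sum_const, nsmul_eq_mul, ← sum_mul, ← mul_sum]
  ring

lemma iInf_dirCut_gadgetWeight (p q : A → ℝ) (S : Finset V) :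
    ⨅ T : Finset A, dirCut (gadgetWeight p q) (S.image Sum.inl ∪ T.image Sum.inr) =
      ∑ a, min (q a * #Sᶜ) (p a * #S) := by
  simp only [image_inl_union_image_inr, dirCut_gadgetWeight, iInf_sum_add_sum_compl]

end GadgetCuts

section ChordInterpolant

open Finset

/-- With `n = s + t`, the value at `s` of the chord interpolant of `u ↦ u * (n - u)` at the
breakpoints `n * x 0, …, n * x (m + 1)`, where `x 0 = 0` and `x (m + 1) = 1`. It is written as the
sum of hat functions that one gadget per interior breakpoint produces, in terms of `s` and `t`
so that nothing has to be divided by `n`. -/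
def chordInterpolant (x : ℕ → ℝ) (m : ℕ) (s t : ℝ) : ℝ :=
  (s + t) * ∑ j ∈ range m, (x (j + 2) - x j) * min (t * x (j + 1)) (s * (1 - x (j + 1)))

variable {x : ℕ → ℝ} {m i : ℕ} {s t : ℝ}

lemma sum_hats_eq (him : i ≤ m) (hleft : ∀ j < i, t * x (j + 1) ≤ s * (1 - x (j + 1)))
    (hright : ∀ j ∈ Ico i m, s * (1 - x (j + 1)) ≤ t * x (j + 1)) :
    ∑ j ∈ range m, (x (j + 2) - x j) * min (t * x (j + 1)) (s * (1 - x (j + 1))) =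
      t * (x i * x (i + 1) - x 0 * x 1) +
        s * ((1 - x i) * (1 - x (i + 1)) - (1 - x m) * (1 - x (m + 1))) := by
  rw [← sum_range_add_sum_Ico _ him]
  congr 1
  · rw [← sum_range_sub (fun j ↦ x j * x (j + 1)), mul_sum]
    refine sum_congr rfl fun j hj ↦ ?_
    rw [min_eq_left (hleft j (mem_range.1 hj))]
    ring
  · rw [← neg_sub, ← sum_Ico_sub (fun j ↦ (1 - x j) * (1 - x (j + 1))) him, ← sum_neg_distrib,
      mul_sum]
    refine sum_congr rfl fun j hj ↦ ?_
    rw [min_eq_right (hright j hj)]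
    ring

lemma exists_apply_le_le_apply_succ {α : Type*} [LinearOrder α] {f : ℕ → α} {a : α}
    (h0 : f 0 ≤ a) (hm : a ≤ f (m + 1)) : ∃ i ≤ m, f i ≤ a ∧ a ≤ f (i + 1) := by
  induction m with
  | zero => exact ⟨0, le_rfl, h0, hm⟩
  | succ k ih =>
    rcases le_total a (f (k + 1)) with hk | hk
    · obtain ⟨i, hik, hi⟩ := ih hk
      exact ⟨i, hik.trans k.le_succ, hi⟩
    · exact ⟨k + 1, le_rfl, hk, hm⟩

lemma exists_mul_sub_chordInterpolant_eq (hx : MonotoneOn x (Set.Iic (m + 1))) (hx0 : x 0 = 0)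
    (hx1 : x (m + 1) = 1) (hs : 0 ≤ s) (ht : 0 ≤ t) :
    ∃ i ≤ m, 0 ≤ s * (1 - x i) - t * x i ∧ 0 ≤ t * x (i + 1) - s * (1 - x (i + 1)) ∧
      s * t - chordInterpolant x m s t =
        (s * (1 - x i) - t * x i) * (t * x (i + 1) - s * (1 - x (i + 1))) := by
  have hmono {j k : ℕ} (hjk : j ≤ k) (hk : k ≤ m + 1) : (s + t) * x j ≤ (s + t) * x k := by
    gcongr
    exact hx (hjk.trans hk) hk hjk
  obtain ⟨i, him, hi, hi'⟩ : ∃ i ≤ m, (s + t) * x i ≤ s ∧ s ≤ (s + t) * x (i + 1) :=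
    exists_apply_le_le_apply_succ (f := fun j ↦ (s + t) * x j) (by simp [hx0, hs])
      (by simp [hx1, ht])
  refine ⟨i, him, by linarith, by linarith, ?_⟩
  rw [chordInterpolant, sum_hats_eq him, hx0, hx1]
  · ring
  · intro j hj
    linarith [hmono (Nat.succ_le_of_lt hj) (by lia)]
  · intro j hj
    obtain ⟨hij, hjm⟩ := mem_Ico.1 hj
    linarith [hmono (Nat.succ_le_succ hij) (by lia)]

lemma chordInterpolant_le_mul (hx : MonotoneOn x (Set.Iic (m + 1))) (hx0 : x 0 = 0)
    (hx1 : x (m + 1) = 1) (hs : 0 ≤ s) (ht : 0 ≤ t) : chordInterpolant x m s t ≤ s * t := by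
  obtain ⟨i, -, hi, hi', heq⟩ := exists_mul_sub_chordInterpolant_eq hx hx0 hx1 hs ht
  exact sub_nonneg.1 (heq ▸ mul_nonneg hi hi')

end ChordInterpolant

section ChordGadgets

open Finset

variable {V : Type*} [Fintype V] {x : ℕ → ℝ} {m : ℕ} {c : ℝ}

/-- The gadgets whose augmented cut function is `c` times `chordInterpolant x m`, one auxiliary
node for each interior breakpoint `|V| * x (j + 1)`. -/
def chordGadgetWeight (V : Type*) [Fintype V] (x : ℕ → ℝ) (m : ℕ) (c : ℝ) :
    V ⊕ Fin m → V ⊕ Fin m → ℝ :=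
  gadgetWeight (fun j ↦ c * Fintype.card V * (x (j + 2) - x j) * (1 - x (j + 1)))
    (fun j ↦ c * Fintype.card V * (x (j + 2) - x j) * x (j + 1))

lemma hat_coefficient_nonneg (hx : MonotoneOn x (Set.Iic (m + 1))) (hc : 0 ≤ c) (j : Fin m) :
    0 ≤ c * Fintype.card V * (x (j + 2) - x j) := by
  have hmono : x j ≤ x (j + 2) :=
    hx (Set.mem_Iic.2 (by lia)) (Set.mem_Iic.2 (by lia)) (by lia)
  exact mul_nonneg (by positivity) (sub_nonneg.2 hmono)

lemma chordGadgetWeight_nonneg (hx : MonotoneOn x (Set.Iic (m + 1))) (hx0 : 0 ≤ x 0)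
    (hx1 : x (m + 1) ≤ 1) (hc : 0 ≤ c) (u v : V ⊕ Fin m) : 0 ≤ chordGadgetWeight V x m c u v := by
  have hle (j : Fin m) : (j : ℕ) + 1 ∈ Set.Iic (m + 1) := Set.mem_Iic.2 (by lia)
  refine gadgetWeight_nonneg (fun j ↦ ?_) (fun j ↦ ?_) u v
  · have hj : x (j + 1) ≤ 1 := (hx (hle j) Set.self_mem_Iic (hle j)).trans hx1
    exact mul_nonneg (hat_coefficient_nonneg hx hc j) (sub_nonneg.2 hj)
  · have hj : 0 ≤ x (j + 1) :=
      hx0.trans <| hx (Set.mem_Iic.2 (Nat.zero_le _)) (hle j) (Nat.zero_le _)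
    exact mul_nonneg (hat_coefficient_nonneg hx hc j) hj

lemma ncard_chordGadgetWeight_ne_zero_le (x : ℕ → ℝ) (m : ℕ) (c : ℝ) :
    {e : (V ⊕ Fin m) × (V ⊕ Fin m) | chordGadgetWeight V x m c e.1 e.2 ≠ 0}.ncard ≤
      2 * (Fintype.card V * m) := by
  simpa only [chordGadgetWeight, Nat.card_eq_fintype_card, Fintype.card_fin] using
    ncard_gadgetWeight_ne_zero_le (V := V) (A := Fin m) _ _

lemma iInf_dirCut_chordGadgetWeight [DecidableEq V] (hx : MonotoneOn x (Set.Iic (m + 1)))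
    (hc : 0 ≤ c) (S : Finset V) :
    ⨅ T : Finset (Fin m), dirCut (chordGadgetWeight V x m c) (S.image Sum.inl ∪ T.image Sum.inr) =
      c * chordInterpolant x m #S #Sᶜ := by
  have hcard : (#S + #Sᶜ : ℝ) = Fintype.card V := by exact_mod_cast S.card_add_card_compl
  rw [chordGadgetWeight, iInf_dirCut_gadgetWeight, chordInterpolant, hcard, ← mul_assoc, mul_sum,
    sum_range]
  refine sum_congr rfl fun j _ ↦ ?_
  rw [← mul_assoc, mul_min_of_nonneg _ _ (hat_coefficient_nonneg hx hc j)]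
  congr 1 <;> ring

end ChordGadgets

section SinSqBreakpoints

open Real Set

/-- The breakpoints `sin² (j * θ)`, `θ = π / (2 * (m + 1))`, increasing from `0` at `j = 0` to `1`
at `j = m + 1`; they are the Chebyshev extremal points of degree `m + 1`, transported to
`[0, 1]`. -/
noncomputable def sinSqBreakpoint (m j : ℕ) : ℝ :=
  sin (j * (π / (2 * (m + 1)))) ^ 2

variable {m : ℕ} {s t ε : ℝ}

lemma sinSqBreakpoint_zero : sinSqBreakpoint m 0 = 0 := by
  simp [sinSqBreakpoint]

lemma sinSqBreakpoint_succ_self : sinSqBreakpoint m (m + 1) = 1 := by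
  have hangle : ((m + 1 : ℕ) : ℝ) * (π / (2 * (m + 1))) = π / 2 := by
    push_cast
    field_simp
  rw [sinSqBreakpoint, hangle, sin_pi_div_two, one_pow]

lemma monotoneOn_sinSqBreakpoint : MonotoneOn (sinSqBreakpoint m) (Iic (m + 1)) := by
  intro i _ j hj hij
  have hangle : j * (π / (2 * (m + 1))) ≤ π / 2 :=
    calc
      j * (π / (2 * (m + 1))) ≤ (m + 1 : ℝ) * (π / (2 * (m + 1))) := by
        gcongr
        exact_mod_cast hj
      _ = π / 2 := by field_simp
  have hi : 0 ≤ i * (π / (2 * (m + 1))) := by positivity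
  have hle : i * (π / (2 * (m + 1))) ≤ j * (π / (2 * (m + 1))) := by gcongr
  exact pow_le_pow_left₀ (sin_nonneg_of_nonneg_of_le_pi hi (by linarith))
    (sin_le_sin_of_le_of_le_pi_div_two (by linarith) hangle hle) 2

lemma chord_error_le_sin_sq_mul (α β s t : ℝ) :
    (s * (1 - sin α ^ 2) - t * sin α ^ 2) * (t * sin β ^ 2 - s * (1 - sin β ^ 2)) ≤
      sin (β - α) ^ 2 * (s * t) := by
  rw [← cos_sq', ← cos_sq', ← sub_nonneg]
  calc
    0 ≤ (s * (cos α * cos β) - t * (sin α * sin β)) ^ 2 := sq_nonneg _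
    _ = _ := by rw [sin_sub]; ring

lemma cos_sq_mul_le_chordInterpolant (hs : 0 ≤ s) (ht : 0 ≤ t) :
    cos (π / (2 * (m + 1))) ^ 2 * (s * t) ≤ chordInterpolant (sinSqBreakpoint m) m s t := by
  obtain ⟨i, -, -, -, heq⟩ := exists_mul_sub_chordInterpolant_eq monotoneOn_sinSqBreakpoint
    sinSqBreakpoint_zero sinSqBreakpoint_succ_self hs ht
  have hgap : ((i + 1 : ℕ) : ℝ) * (π / (2 * (m + 1))) - i * (π / (2 * (m + 1))) =
      π / (2 * (m + 1)) := by
    push_cast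
    ring
  have herror : s * t - chordInterpolant (sinSqBreakpoint m) m s t ≤
      sin (π / (2 * (m + 1))) ^ 2 * (s * t) := by
    rw [heq, ← hgap]
    exact chord_error_le_sin_sq_mul _ _ s t
  rw [cos_sq']
  linarith

lemma one_le_mul_cos_sq (hε : 0 < ε) (hm : π / (2 * √ε) ≤ m) :
    1 ≤ (1 + ε) * cos (π / (2 * (m + 1))) ^ 2 := by
  have hm_one : (1 : ℝ) ≤ m := by
    have : (0 : ℝ) < m := lt_of_lt_of_le (by positivity) hm
    exact_mod_cast this
  have hpi_sq : π ^ 2 ≤ 4 * ε * m ^ 2 :=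
    calc
      π ^ 2 ≤ (m * (2 * √ε)) ^ 2 := by
        gcongr
        exact (div_le_iff₀ (by positivity)).1 hm
      _ = 4 * ε * m ^ 2 := by rw [mul_pow, mul_pow, sq_sqrt hε.le]; ring
  have hpi_sq' : π ^ 2 ≤ 12 := by nlinarith [pi_pos, pi_lt_d2]
  have hangle : (1 + ε) * (π / (2 * (m + 1))) ^ 2 ≤ ε := by
    rw [div_pow, mul_div_assoc', div_le_iff₀ (by positivity)]
    calc
      (1 + ε) * π ^ 2 = π ^ 2 + ε * π ^ 2 := by ring
      _ ≤ 4 * ε * m ^ 2 + ε * (8 * m + 4) := by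
        gcongr
        linarith
      _ = ε * (2 * (m + 1)) ^ 2 := by ring
  have hsin : (1 + ε) * sin (π / (2 * (m + 1))) ^ 2 ≤ (1 + ε) * (π / (2 * (m + 1))) ^ 2 := by
    gcongr ?_ * ?_
    exact sin_sq_le_sq
  rw [cos_sq']
  linarith

end SinSqBreakpoints

section SparsifierConstruction

open Finset Real

variable {V : Type*} [Fintype V] [DecidableEq V] {m : ℕ} {ε : ℝ}

theorem augmented_sparsifier_complete_graph_general (hε : 0 < ε) (hm : π / (2 * √ε) ≤ m) :
    ∃ W : V ⊕ Fin m → V ⊕ Fin m → ℝ,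
      (∀ u v, 0 ≤ W u v) ∧
      {p : (V ⊕ Fin m) × (V ⊕ Fin m) | W p.1 p.2 ≠ 0}.ncard ≤ 2 * (Fintype.card V * m) ∧
      ∀ S : Finset V,
        (#S : ℝ) * (Fintype.card V - #S) ≤
          (⨅ T : Finset (Fin m), dirCut W (S.image Sum.inl ∪ T.image Sum.inr)) ∧
        (⨅ T : Finset (Fin m), dirCut W (S.image Sum.inl ∪ T.image Sum.inr)) ≤
          (1 + ε) * (#S * (Fintype.card V - #S)) := by
  have hc : 0 ≤ 1 + ε := by positivity
  refine ⟨chordGadgetWeight V (sinSqBreakpoint m) m (1 + ε),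
    chordGadgetWeight_nonneg monotoneOn_sinSqBreakpoint sinSqBreakpoint_zero.ge
      sinSqBreakpoint_succ_self.le hc, ncard_chordGadgetWeight_ne_zero_le _ _ _, fun S ↦ ?_⟩
  rw [iInf_dirCut_chordGadgetWeight monotoneOn_sinSqBreakpoint hc,
    ← Nat.cast_sub S.card_le_univ, ← card_compl]
  have hs : (0 : ℝ) ≤ #S := by positivity
  have ht : (0 : ℝ) ≤ #Sᶜ := by positivity
  constructor
  · calc
      (#S * #Sᶜ : ℝ) ≤ (1 + ε) * cos (π / (2 * (m + 1))) ^ 2 * (#S * #Sᶜ) :=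
        le_mul_of_one_le_left (by positivity) (one_le_mul_cos_sq hε hm)
      _ ≤ (1 + ε) * chordInterpolant (sinSqBreakpoint m) m #S #Sᶜ := by
        rw [mul_assoc]
        gcongr
        exact cos_sq_mul_le_chordInterpolant hs ht
  · gcongr
    exact chordInterpolant_le_mul monotoneOn_sinSqBreakpoint sinSqBreakpoint_zero
      sinSqBreakpoint_succ_self hs ht

lemma one_le_one_add_logb_one_add_logb (hε : 0 < ε) (hε' : ε ≤ 1) :
    1 ≤ 1 + logb 2 (1 + logb 2 (1 / ε)) := by
  have hlog : 0 ≤ logb 2 (1 / ε) := logb_nonneg one_lt_two (one_le_one_div hε hε')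
  exact le_add_of_nonneg_right (logb_nonneg one_lt_two (le_add_of_nonneg_right hlog))

lemma natCeil_pi_div_two_mul_sqrt_le (hε : 0 < ε) (hε' : ε ≤ 1) :
    (⌈π / (2 * √ε)⌉₊ : ℝ) ≤ 3 * (1 / √ε) :=
  calc
    (⌈π / (2 * √ε)⌉₊ : ℝ) ≤ π / (2 * √ε) + 1 := (Nat.ceil_lt_add_one (by positivity)).le
    _ = π / 2 * (1 / √ε) + 1 := by ring
    _ ≤ 2 * (1 / √ε) + 1 / √ε := by
      gcongr
      · linarith [pi_le_four]
      · exact one_le_one_div (sqrt_pos.2 hε) (sqrt_le_one.2 hε')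
    _ = 3 * (1 / √ε) := by ring

end SparsifierConstruction

/-- **Augmented cut sparsifiers for the complete graph.**
There is an absolute constant `C > 0` such that for every `ε ∈ (0,1)` and every finite set
`V` with `n = |V| ≥ 2`, there are an auxiliary set `A = Fin m` with
`m ≤ C·ε^{-1/2}·(1 + log₂(1 + log₂(1/ε)))` and a nonnegative weight function on
`(V ⊕ A) × (V ⊕ A)` with at most `C·n·ε^{-1/2}·(1 + log₂(1 + log₂(1/ε)))` nonzero values,
whose augmented cut `(1+ε)`-approximates `S ↦ |S|·(n - |S|)`. -/
theorem augmented_sparsifier_complete_graph :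
    ∃ C : ℝ, 0 < C ∧
      ∀ ε : ℝ, 0 < ε → ε < 1 →
      ∀ (V : Type) [Fintype V] [DecidableEq V], 2 ≤ Fintype.card V →
      ∃ (m : ℕ) (W : (V ⊕ Fin m) → (V ⊕ Fin m) → ℝ),
        (∀ u v, 0 ≤ W u v) ∧
        (m : ℝ) ≤ C * (1 / Real.sqrt ε) *
            (1 + Real.logb 2 (1 + Real.logb 2 (1 / ε))) ∧
        (({p : (V ⊕ Fin m) × (V ⊕ Fin m) | W p.1 p.2 ≠ 0}.ncard : ℝ)
          ≤ C * (Fintype.card V : ℝ) * (1 / Real.sqrt ε) *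
              (1 + Real.logb 2 (1 + Real.logb 2 (1 / ε)))) ∧
        ∀ S : Finset V,
          (S.card : ℝ) * ((Fintype.card V : ℝ) - (S.card : ℝ))
            ≤ (⨅ T : Finset (Fin m), dirCut W (S.image Sum.inl ∪ T.image Sum.inr)) ∧
          (⨅ T : Finset (Fin m), dirCut W (S.image Sum.inl ∪ T.image Sum.inr))
            ≤ (1 + ε) * ((S.card : ℝ) * ((Fintype.card V : ℝ) - (S.card : ℝ))) := by
  refine ⟨6, by norm_num, fun ε hε hε' V _ _ _ ↦ ?_⟩
  have hm : (⌈Real.pi / (2 * √ε)⌉₊ : ℝ) ≤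
      3 * (1 / √ε) * (1 + Real.logb 2 (1 + Real.logb 2 (1 / ε))) :=
    (natCeil_pi_div_two_mul_sqrt_le hε hε'.le).trans <|
      le_mul_of_one_le_right (by positivity) (one_le_one_add_logb_one_add_logb hε hε'.le)
  obtain ⟨W, hW, hncard, hcut⟩ :=
    augmented_sparsifier_complete_graph_general (V := V) hε (Nat.le_ceil _)
  refine ⟨_, W, hW, by linarith [Nat.cast_nonneg (α := ℝ) ⌈Real.pi / (2 * √ε)⌉₊], ?_, hcut⟩
  calc
    _ ≤ 2 * ((Fintype.card V : ℝ) * ⌈Real.pi / (2 * √ε)⌉₊) := by exact_mod_cast hncard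
    _ ≤ 2 * ((Fintype.card V : ℝ) *
          (3 * (1 / √ε) * (1 + Real.logb 2 (1 + Real.logb 2 (1 / ε))))) := by gcongr
    _ = _ := by ring
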